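/- arXiv:1503.06778 — 3 statements merged into one kernel-verified Lean document; each statement's English description precedes it below -/
import Mathlib

section
/- Counterexample (main claim): for every q, p with 1 ≤ q < p < ∞ there exist a lattice (the tri-adic intervals in [0,1)), positive measures μ (Lebesgue measure on [0,1)) and ν (the 1/3-Cantor measure), nonnegative constants α = {α_I} given by α_I = (2/3)^{n/p} if I is a tri-adic interval of length 3^{-n} contained in C_n and α_I = 0 otherwise, such that the testing condition ∫_J (Σ_{I ⊆ J} α_I^q 1_I)^{p/q} dν ≤ C₁^p μ(J) holds for all tri-adic J with a finite constant C₁, yet there is NO finite constant C with ∫ (Σ_I |α_I E_I^μ f|^q)^{p/q} dν ≤ C^p ∫ |f|^p dμ for all f ∈ L^p(μ). -/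
open MeasureTheory ENNReal NNReal Set Filter
open scoped Classical

/-- The tri-adic interval `[k·3⁻ⁿ, (k+1)·3⁻ⁿ)`. -/
noncomputable def triadic (n k : ℕ) : Set ℝ :=
  Ico ((k : ℝ) * 3 ^ (-(n : ℤ))) (((k : ℝ) + 1) * 3 ^ (-(n : ℤ)))

/-- The left endpoint `∑_j ε_j 3^{-(j+1)}` (with digits `ε_j ∈ {0,2}`) of a component of
the `n`-th step `C_n` of the 1/3-Cantor set construction. -/
noncomputable def cantorBase {n : ℕ} (ε : Fin n → Bool) : ℝ :=
  ∑ j : Fin n, (if ε j then 2 else 0) * (3 : ℝ) ^ (-((j : ℕ) : ℤ) - 1)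

/-- The connected component of `C_n` with digits `ε`. -/
noncomputable def cantorPiece {n : ℕ} (ε : Fin n → Bool) : Set ℝ :=
  Ico (cantorBase ε) (cantorBase ε + 3 ^ (-(n : ℤ)))

/-- The `n`-th step `C_n` of the 1/3-Cantor set construction: `C_0 = [0,1)`,
`C_1 = [0,1/3) ∪ [2/3,1)`, etc. -/
noncomputable def cantorN (n : ℕ) : Set ℝ := ⋃ ε : Fin n → Bool, cantorPiece ε

/-- The 1/3-Cantor set (made of half-open intervals): `C = ⋂_n C_n`. -/
noncomputable def cexCantorSet : Set ℝ := ⋂ n, cantorN n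

/-- The middle-third gap of the component of `C_m` with digits `ε`: a maximal tri-adic
interval of `[0,1) \ C` of length `3^{-(m+1)}`. -/
noncomputable def gapPiece {m : ℕ} (ε : Fin m → Bool) : Set ℝ :=
  Ico (cantorBase ε + 3 ^ (-(m + 1 : ℤ))) (cantorBase ε + 2 * 3 ^ (-(m + 1 : ℤ)))

/-- The coefficients of the counterexample: `α_I = (2/3)^{n/p}` if `I` is a tri-adic
interval of length `3⁻ⁿ` contained in `C_n`, and `α_I = 0` otherwise. -/
noncomputable def cexAlpha (p : ℝ) (n k : ℕ) : ℝ≥0∞ :=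
  if triadic n k ⊆ cantorN n then ENNReal.ofReal ((2 / 3 : ℝ) ^ ((n : ℝ) / p)) else 0

/-- The function of the counterexample: `f = (3/2)^{m/p} · m^{-r}` on each maximal
tri-adic gap interval of `[0,1) \ C` of length `3^{-m}`, and `f = 0` on `C`. -/
noncomputable def cexF (p r : ℝ) : ℝ → ℝ≥0∞ := fun x =>
  ∑' s : Σ m : ℕ, Fin m → Bool,
    (gapPiece s.2).indicator
      (fun _ => ENNReal.ofReal ((3 / 2 : ℝ) ^ (((s.1 : ℝ) + 1) / p) *
        ((s.1 : ℝ) + 1) ^ (-r))) x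

/-- The averaging operator `E_I^μ f = (μ(I)⁻¹ ∫_I f dμ) · 1_I`. -/
noncomputable def avgOp (μ : Measure ℝ) (I : Set ℝ) (f : ℝ → ℝ≥0∞) : ℝ → ℝ≥0∞ :=
  I.indicator fun _ => (∫⁻ y in I, f y ∂μ) / μ I

/-- Lebesgue measure restricted to `[0,1)`. -/
noncomputable def cexMu : Measure ℝ := volume.restrict (Ico (0 : ℝ) 1)

/-- doubling map -/
noncomputable def cxT (x : ℝ) : ℝ := if 1 / 2 ≤ x then 2 * x - 1 else 2 * x

/-- first binary digit -/
noncomputable def cxBit (x : ℝ) : ℝ := if 1 / 2 ≤ x then 1 else 0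

/-- binary to ternary map -/
noncomputable def cxG (x : ℝ) : ℝ := ∑' j : ℕ, 2 * cxBit (cxT^[j] x) * (1 / 3 : ℝ) ^ (j + 1)

lemma cxBit_nonneg (x : ℝ) : 0 ≤ cxBit x := by
  unfold cxBit; split_ifs <;> norm_num

lemma cxBit_le (x : ℝ) : cxBit x ≤ 1 := by
  unfold cxBit; split_ifs <;> norm_num

lemma cx_geo : HasSum (fun j : ℕ => 2 * (1 / 3 : ℝ) ^ (j + 1)) 1 := by
  have h := (hasSum_geometric_of_lt_one (r := (1 / 3 : ℝ)) (by norm_num) (by norm_num)).mul_left (2 / 3)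
  have e1 : (fun j : ℕ => 2 * (1 / 3 : ℝ) ^ (j + 1)) = fun i => 2 / 3 * (1 / 3) ^ i := by
    funext j; rw [pow_succ]; ring
  have e2 : (2 / 3 : ℝ) * (1 - 1 / 3)⁻¹ = 1 := by norm_num
  rw [e1]; rwa [e2] at h

lemma cxG_term_le (x : ℝ) (j : ℕ) :
    2 * cxBit (cxT^[j] x) * (1 / 3 : ℝ) ^ (j + 1) ≤ 2 * (1 / 3 : ℝ) ^ (j + 1) := by
  have := cxBit_le (cxT^[j] x)
  have h : (0 : ℝ) ≤ (1 / 3 : ℝ) ^ (j + 1) := by positivity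
  nlinarith

lemma cxG_term_nonneg (x : ℝ) (j : ℕ) :
    0 ≤ 2 * cxBit (cxT^[j] x) * (1 / 3 : ℝ) ^ (j + 1) := by
  have := cxBit_nonneg (cxT^[j] x)
  positivity

lemma cxG_summable (x : ℝ) :
    Summable (fun j : ℕ => 2 * cxBit (cxT^[j] x) * (1 / 3 : ℝ) ^ (j + 1)) :=
  Summable.of_nonneg_of_le (cxG_term_nonneg x) (cxG_term_le x) cx_geo.summable

lemma cxG_nonneg (x : ℝ) : 0 ≤ cxG x := tsum_nonneg (cxG_term_nonneg x)

lemma cxG_le (x : ℝ) : cxG x ≤ 1 := by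
  have := (cxG_summable x).tsum_le_tsum (cxG_term_le x) cx_geo.summable
  rwa [cx_geo.tsum_eq] at this

lemma cxG_rec (x : ℝ) : cxG x = 2 * cxBit x / 3 + cxG (cxT x) / 3 := by
  unfold cxG
  rw [(cxG_summable x).tsum_eq_zero_add]
  simp only [Function.iterate_succ_apply, Function.iterate_zero, id]
  congr 1
  · ring
  · rw [← tsum_div_const]
    congr 1; funext j; rw [pow_succ _ (j + 1)]; ring

lemma cxG_eq_one (n : ℕ) : ∀ x : ℝ, x ∈ Ico (0 : ℝ) 1 → cxG x = 1 → 1 - x ≤ (1 / 2) ^ n := by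
  induction n with
  | zero => intro x hx _; simp; exact hx.1
  | succ n ih =>
    intro x hx h
    have h1 := cxG_rec x
    have h2 := cxG_le (cxT x)
    by_cases hb : 1 / 2 ≤ x
    · have hT : cxT x = 2 * x - 1 := by simp only [cxT, if_pos hb]
      have hB : cxBit x = 1 := by simp only [cxBit, if_pos hb]
      have := ih (cxT x) (by rw [hT]; constructor <;> linarith [hx.2]) (by rw [hB] at h1; linarith)
      rw [hT] at this
      rw [pow_succ]; linarith
    · have hB : cxBit x = 0 := by simp only [cxBit, if_neg hb]
      rw [hB] at h1; linarith

lemma cxG_lt (x : ℝ) (hx : x ∈ Ico (0 : ℝ) 1) : cxG x < 1 := by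
  rcases lt_or_eq_of_le (cxG_le x) with h | h
  · exact h
  · obtain ⟨n, hn⟩ := exists_pow_lt_of_lt_one (show (0 : ℝ) < 1 - x by linarith [hx.2])
      (show (1 / 2 : ℝ) < 1 by norm_num)
    linarith [cxG_eq_one n x hx h]

lemma cxT_mem (x : ℝ) (hx : x ∈ Ico (0 : ℝ) 1) : cxT x ∈ Ico (0 : ℝ) 1 := by
  obtain ⟨h1, h2⟩ := hx
  unfold cxT
  split_ifs with h
  · constructor <;> linarith
  · push Not at h; constructor <;> linarith

lemma cxT_meas : Measurable cxT := by
  unfold cxT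
  exact Measurable.ite measurableSet_Ici (by fun_prop) (by fun_prop)

lemma cxBit_meas : Measurable cxBit := by
  unfold cxBit
  exact Measurable.ite measurableSet_Ici (by fun_prop) (by fun_prop)

lemma cxG_meas : Measurable cxG := by
  refine measurable_of_tendsto_metrizable (f := fun (n : ℕ) (x : ℝ) =>
    ∑ j ∈ Finset.range n, 2 * cxBit (cxT^[j] x) * (1 / 3 : ℝ) ^ (j + 1)) ?_ ?_
  · intro n
    refine Finset.measurable_sum _ fun j _ => ?_
    exact ((cxBit_meas.comp (cxT_meas.iterate j)).const_mul 2).mul_const _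
  · rw [tendsto_pi_nhds]
    intro x
    exact (cxG_summable x).hasSum.tendsto_sum_nat

/-! ### cantor pieces -/

lemma cantorBase_cons {n : ℕ} (b : Bool) (ε : Fin n → Bool) :
    cantorBase (Fin.cons b ε : Fin (n + 1) → Bool) =
      (if b then 2 else 0) / 3 + cantorBase ε / 3 := by
  unfold cantorBase
  rw [Fin.sum_univ_succ, Finset.sum_div]
  congr 1
  · simp only [Fin.cons_zero, Fin.val_zero]; cases b <;> norm_num
  · refine Finset.sum_congr rfl fun j _ => ?_
    simp only [Fin.cons_succ, Fin.val_succ]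
    have : (-((j : ℕ) + 1 : ℕ) - 1 : ℤ) = (-((j : ℕ) : ℤ) - 1) - 1 := by push_cast; ring
    rw [this, zpow_sub_one₀ (by norm_num : (3 : ℝ) ≠ 0)]; ring

lemma cx_pow_succ (n : ℕ) : (3 : ℝ) ^ (-((n + 1 : ℕ) : ℤ)) = 3 ^ (-(n : ℤ)) / 3 := by
  have : (-((n + 1 : ℕ) : ℤ)) = -(n : ℤ) - 1 := by push_cast; ring
  rw [this, zpow_sub_one₀ (by norm_num : (3 : ℝ) ≠ 0)]; ring

lemma cx_pow_pos (n : ℕ) : (0 : ℝ) < (3 : ℝ) ^ (-(n : ℤ)) := by positivity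

lemma mem_piece_cons {n : ℕ} (b : Bool) (ε : Fin n → Bool) (y : ℝ) :
    y ∈ cantorPiece (Fin.cons b ε : Fin (n + 1) → Bool) ↔
      3 * y - (if b then 2 else 0) ∈ cantorPiece ε := by
  unfold cantorPiece
  rw [cantorBase_cons, cx_pow_succ, mem_Ico, mem_Ico]
  constructor <;> rintro ⟨h1, h2⟩ <;> constructor <;> linarith

lemma piece_subset {n : ℕ} (ε : Fin n → Bool) : cantorPiece ε ⊆ Ico (0 : ℝ) 1 := by
  induction n with
  | zero => simp [cantorPiece, cantorBase]
  | succ n ih =>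
    intro y hy
    rw [← Fin.cons_self_tail ε, mem_piece_cons] at hy
    have := ih _ hy
    split_ifs at this <;> constructor <;> linarith [this.1, this.2]

lemma piece_triadic {n : ℕ} (ε : Fin n → Bool) : ∃ K : ℕ, cantorPiece ε = triadic n K := by
  have key : ∃ K : ℕ, cantorBase ε = K * (3 : ℝ) ^ (-(n : ℤ)) := by
    induction n with
    | zero => exact ⟨0, by simp [cantorBase]⟩
    | succ n ih =>
      obtain ⟨K, hK⟩ := ih (Fin.tail ε)
      refine ⟨(if ε 0 then 2 else 0) * 3 ^ n + K, ?_⟩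
      rw [← Fin.cons_self_tail ε, cantorBase_cons, hK, cx_pow_succ, Fin.cons_zero]
      have h : (3 : ℝ) ^ n * 3 ^ (-(n : ℤ)) = 1 := by
        rw [zpow_neg, zpow_natCast]; exact mul_inv_cancel₀ (by positivity)
      push_cast
      linear_combination (-(if ε 0 then (2 : ℝ) else 0) / 3) * h
  obtain ⟨K, hK⟩ := key
  refine ⟨K, ?_⟩
  unfold cantorPiece triadic
  rw [hK]; congr 1; ring

lemma piece_init {n : ℕ} (ε : Fin (n + 1) → Bool) :
    cantorPiece ε ⊆ cantorPiece (Fin.init ε) := by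
  have h : cantorBase ε = cantorBase (Fin.init ε) +
      (if ε (Fin.last n) then 2 else 0) * ((3 : ℝ) ^ (-(n : ℤ)) / 3) := by
    unfold cantorBase
    rw [Fin.sum_univ_castSucc]
    congr 1
    rw [Fin.val_last, zpow_sub_one₀ (by norm_num : (3 : ℝ) ≠ 0)]; ring
  intro y hy
  unfold cantorPiece at *
  rw [h, cx_pow_succ] at hy
  have := cx_pow_pos n
  split_ifs at hy <;> constructor <;> linarith [hy.1, hy.2]

lemma cantorN_succ (n : ℕ) : cantorN (n + 1) ⊆ cantorN n := by
  intro y hy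
  obtain ⟨ε, hε⟩ := mem_iUnion.1 hy
  exact mem_iUnion.2 ⟨_, piece_init ε hε⟩

lemma cantorN_anti : Antitone cantorN := antitone_nat_of_succ_le cantorN_succ

lemma cantorN_sub (n : ℕ) : cantorN n ⊆ Ico (0 : ℝ) 1 := iUnion_subset fun ε => piece_subset ε

lemma piece_meas {n : ℕ} (ε : Fin n → Bool) : MeasurableSet (cantorPiece ε) := measurableSet_Ico

lemma cantorN_meas (n : ℕ) : MeasurableSet (cantorN n) := MeasurableSet.iUnion fun ε => piece_meas ε

lemma triadic_meas (n k : ℕ) : MeasurableSet (triadic n k) := measurableSet_Ico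

lemma triadic_vol (n k : ℕ) : volume (triadic n k) = ENNReal.ofReal ((3 : ℝ) ^ (-(n : ℤ))) := by
  unfold triadic
  rw [Real.volume_Ico]; congr 1; ring

lemma piece_vol {n : ℕ} (ε : Fin n → Bool) :
    volume (cantorPiece ε) = ENNReal.ofReal ((3 : ℝ) ^ (-(n : ℤ))) := by
  obtain ⟨K, hK⟩ := piece_triadic ε
  rw [hK, triadic_vol]

lemma triadic_left (n k : ℕ) : (k : ℝ) * 3 ^ (-(n : ℤ)) ∈ triadic n k := by
  have := cx_pow_pos n
  constructor
  · exact le_rfl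
  · nlinarith

lemma triadic_unique {n j k : ℕ} {x : ℝ} (h1 : x ∈ triadic n j) (h2 : x ∈ triadic n k) : j = k := by
  have h := cx_pow_pos n
  have a : (j : ℝ) < k + 1 := lt_of_mul_lt_mul_right (h1.1.trans_lt h2.2) h.le
  have b : (k : ℝ) < j + 1 := lt_of_mul_lt_mul_right (h2.1.trans_lt h1.2) h.le
  have a' : j < k + 1 := by exact_mod_cast a
  have b' : k < j + 1 := by exact_mod_cast b
  omega

lemma triadic_level {m j n k : ℕ} (h : triadic m j ⊆ triadic n k) : n ≤ m := by
  have := measure_mono (μ := volume) h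
  rw [triadic_vol, triadic_vol, ENNReal.ofReal_le_ofReal_iff (cx_pow_pos n).le] at this
  have := (zpow_le_zpow_iff_right₀ (by norm_num : (1 : ℝ) < 3)).1 this
  omega

lemma triadic_piece {n k : ℕ} {x : ℝ} (h1 : x ∈ triadic n k) (h2 : x ∈ cantorN n) :
    ∃ ε : Fin n → Bool, cantorPiece ε = triadic n k := by
  obtain ⟨ε, hε⟩ := mem_iUnion.1 h2
  obtain ⟨K, hK⟩ := piece_triadic ε
  rw [hK] at hε
  exact ⟨ε, by rw [hK, triadic_unique hε h1]⟩

/-! ### the measure -/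

lemma cxG_mem_cantorN (n : ℕ) : ∀ x ∈ Ico (0 : ℝ) 1, cxG x ∈ cantorN n := by
  induction n with
  | zero =>
    intro x hx
    refine mem_iUnion.2 ⟨Fin.elim0, ?_⟩
    simp [cantorPiece, cantorBase]
    exact ⟨cxG_nonneg x, cxG_lt x hx⟩
  | succ n ih =>
    intro x hx
    obtain ⟨ε, hε⟩ := mem_iUnion.1 (ih _ (cxT_mem x hx))
    refine mem_iUnion.2 ⟨(Fin.cons (decide (1 / 2 ≤ x)) ε : Fin (n + 1) → Bool), ?_⟩
    rw [mem_piece_cons]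
    have h := cxG_rec x
    convert hε using 1
    rw [h]; unfold cxBit
    by_cases hb : 1 / 2 ≤ x
    · simp only [hb, decide_true, if_true]; ring
    · simp only [hb, decide_false, if_false]; simp; ring

lemma cx_pre_cons {n : ℕ} (b : Bool) (ε : Fin n → Bool) :
    cxG ⁻¹' cantorPiece (Fin.cons b ε : Fin (n + 1) → Bool) ∩ Ico 0 1 =
      (fun x : ℝ => 2 * x) ⁻¹' ((fun x : ℝ => x + (if b then -1 else 0)) ⁻¹'
        (cxG ⁻¹' cantorPiece ε ∩ Ico 0 1)) := by
  ext x
  simp only [mem_inter_iff, mem_preimage, mem_piece_cons]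
  have hG := cxG_rec x
  constructor
  · rintro ⟨h1, h2⟩
    have hT := cxT_mem x h2
    have h3 := piece_subset _ h1
    have h4 := cxG_lt _ hT
    have h5 := cxG_nonneg (cxT x)
    by_cases hb : 1 / 2 ≤ x
    · have hB : cxBit x = 1 := by simp only [cxBit, if_pos hb]
      have hTx : cxT x = 2 * x + -1 := by simp only [cxT, if_pos hb]; ring
      cases b
      · exfalso; simp at h3; rw [hB] at hG; linarith [h3.2]
      · simp only [if_true] at h1 ⊢
        rw [← hTx]; refine ⟨?_, hT⟩
        convert h1 using 1; rw [hG, hB]; ring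
    · have hB : cxBit x = 0 := by simp only [cxBit, if_neg hb]
      have hTx : cxT x = 2 * x + 0 := by simp only [cxT, if_neg hb]; ring
      cases b
      · simp only [Bool.false_eq_true, if_false] at h1 ⊢
        rw [← hTx]; refine ⟨?_, hT⟩
        convert h1 using 1; rw [hG, hB]; ring
      · exfalso; simp at h3; rw [hB] at hG; linarith [h3.1]
  · rintro ⟨h1, h2⟩
    cases b
    · simp only [Bool.false_eq_true, if_false] at h1 h2 ⊢
      have hb : ¬ (1 / 2 ≤ x) := by linarith [h2.2]
      have hB : cxBit x = 0 := by simp only [cxBit, if_neg hb]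
      have hTx : cxT x = 2 * x + 0 := by simp only [cxT, if_neg hb]; ring
      rw [← hTx] at h1
      refine ⟨?_, by constructor <;> linarith [h2.1, h2.2]⟩
      convert h1 using 1; rw [hG, hB]; ring
    · simp only [if_true] at h1 h2 ⊢
      have hb : 1 / 2 ≤ x := by linarith [h2.1]
      have hB : cxBit x = 1 := by simp only [cxBit, if_pos hb]
      have hTx : cxT x = 2 * x + -1 := by simp only [cxT, if_pos hb]; ring
      rw [← hTx] at h1
      refine ⟨?_, by constructor <;> linarith [h2.1, h2.2]⟩
      convert h1 using 1; rw [hG, hB]; ring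

lemma cx_vol {n : ℕ} (ε : Fin n → Bool) :
    volume (cxG ⁻¹' cantorPiece ε ∩ Ico 0 1) = (2 : ℝ≥0∞)⁻¹ ^ n := by
  induction n with
  | zero =>
    have : cxG ⁻¹' cantorPiece ε ∩ Ico 0 1 = Ico 0 1 := by
      apply inter_eq_right.2
      intro x hx
      simp [cantorPiece, cantorBase]
      exact ⟨cxG_nonneg x, cxG_lt x hx⟩
    rw [this]; simp
  | succ n ih =>
    rw [← Fin.cons_self_tail ε, cx_pre_cons, Real.volume_preimage_mul_left (by norm_num),
      measure_preimage_add_right, ih, pow_succ, mul_comm]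
    congr 1
    rw [abs_of_pos (by norm_num), ENNReal.ofReal_inv_of_pos (by norm_num)]; simp

/-- the Cantor measure -/
noncomputable def cxNu : Measure ℝ := (volume.restrict (Ico (0 : ℝ) 1)).map cxG

lemma cxNu_piece {n : ℕ} (ε : Fin n → Bool) : cxNu (cantorPiece ε) = (2 : ℝ≥0∞)⁻¹ ^ n := by
  unfold cxNu
  rw [Measure.map_apply cxG_meas (piece_meas ε),
    Measure.restrict_apply (cxG_meas (piece_meas ε)), cx_vol]

lemma cxNu_compl : cxNu (Ico (0 : ℝ) 1)ᶜ = 0 := by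
  unfold cxNu
  rw [Measure.map_apply cxG_meas measurableSet_Ico.compl,
    Measure.restrict_apply (cxG_meas measurableSet_Ico.compl)]
  convert measure_empty (μ := (volume : Measure ℝ))
  ext x
  simp only [mem_inter_iff, mem_preimage, mem_compl_iff, mem_empty_iff_false, iff_false, not_and]
  intro h hx
  exact h ⟨cxG_nonneg x, cxG_lt x hx⟩

lemma cxNu_cantorN (n : ℕ) : cxNu (cantorN n) = 1 := by
  unfold cxNu
  rw [Measure.map_apply cxG_meas (cantorN_meas n),
    Measure.restrict_apply (cxG_meas (cantorN_meas n)), inter_eq_right.2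
      (show Ico (0 : ℝ) 1 ⊆ cxG ⁻¹' cantorN n from cxG_mem_cantorN n)]
  simp

lemma cexMu_of_sub {S : Set ℝ} (hS : MeasurableSet S) (h : S ⊆ Ico (0 : ℝ) 1) :
    cexMu S = volume S := by
  unfold cexMu
  rw [Measure.restrict_apply hS, inter_eq_left.2 h]

/-! ### testing condition -/

lemma cx_alpha_pow (p q : ℝ) (hq : 0 < q) (m : ℕ) :
    ENNReal.ofReal ((2 / 3 : ℝ) ^ ((m : ℝ) / p)) ^ q =
      ENNReal.ofReal ((2 / 3 : ℝ) ^ (q / p)) ^ m := by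
  rw [ENNReal.ofReal_rpow_of_nonneg (by positivity) hq.le, ← ENNReal.ofReal_pow (by positivity),
    ← Real.rpow_mul (by norm_num), ← Real.rpow_mul_natCast (by norm_num)]
  congr 2; ring

lemma cx_sum_zero (p q : ℝ) (hq : 0 < q) (n k : ℕ) (h : ¬ triadic n k ⊆ cantorN n) (x : ℝ) :
    (∑' mj : ℕ × ℕ, if triadic mj.1 mj.2 ⊆ triadic n k then
      cexAlpha p mj.1 mj.2 ^ q * (triadic mj.1 mj.2).indicator 1 x else 0) = 0 := by
  rw [ENNReal.tsum_eq_zero]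
  rintro ⟨m, j⟩
  dsimp only
  split_ifs with hI
  · have : cexAlpha p m j = 0 := by
      unfold cexAlpha
      rw [if_neg]
      intro hm
      apply h
      have hl := triadic_left m j
      obtain ⟨ε, hε⟩ := triadic_piece (hI hl) (cantorN_anti (triadic_level hI) (hm hl))
      rw [← hε]
      exact subset_iUnion _ ε
    rw [this, ENNReal.zero_rpow_of_pos hq, zero_mul]
  · rfl

lemma cx_sum_le (p q : ℝ) (hq : 0 < q) (n k : ℕ) (x : ℝ) :
    (∑' mj : ℕ × ℕ, if triadic mj.1 mj.2 ⊆ triadic n k then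
      cexAlpha p mj.1 mj.2 ^ q * (triadic mj.1 mj.2).indicator 1 x else 0) ≤
      ENNReal.ofReal ((2 / 3 : ℝ) ^ (q / p)) ^ n *
        (1 - ENNReal.ofReal ((2 / 3 : ℝ) ^ (q / p)))⁻¹ := by
  set β := ENNReal.ofReal ((2 / 3 : ℝ) ^ (q / p)) with hβ
  rw [ENNReal.tsum_prod']
  have inner : ∀ m : ℕ, (∑' j : ℕ, if triadic m j ⊆ triadic n k then
      cexAlpha p m j ^ q * (triadic m j).indicator 1 x else 0) ≤ if n ≤ m then β ^ m else 0 := by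
    intro m
    by_cases hj : ∃ j, x ∈ triadic m j
    · obtain ⟨j, hj⟩ := hj
      rw [tsum_eq_single j]
      · split_ifs with h1 h2 h2
        · rw [indicator_of_mem hj, Pi.one_apply, mul_one]
          unfold cexAlpha
          split_ifs
          · rw [cx_alpha_pow p q hq]
          · rw [ENNReal.zero_rpow_of_pos hq]; exact zero_le
        · exact absurd (triadic_level h1) h2
        · exact zero_le
        · exact le_rfl
      · intro j' hj'
        rw [indicator_of_notMem (fun h => hj' (triadic_unique h hj)), mul_zero, ite_self]
    · push Not at hj
      have : ∀ j, (if triadic m j ⊆ triadic n k then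
        cexAlpha p m j ^ q * (triadic m j).indicator (1 : ℝ → ℝ≥0∞) x else 0) = 0 := by
        intro j
        rw [indicator_of_notMem (hj j), mul_zero, ite_self]
      simp only [this, tsum_zero]
      exact zero_le
  refine (ENNReal.tsum_le_tsum inner).trans ?_
  rw [← ENNReal.summable.sum_add_tsum_nat_add' (k := n), ← ENNReal.tsum_geometric,
    ← ENNReal.tsum_mul_left]
  have : (∑ i ∈ Finset.range n, if n ≤ i then β ^ i else 0) = 0 := by
    refine Finset.sum_eq_zero fun i hi => ?_
    rw [if_neg]; simpa using hi
  rw [this, zero_add]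
  refine ENNReal.tsum_le_tsum fun i => ?_
  rw [if_pos (by omega), pow_add, mul_comm]

lemma cx_testing (p q : ℝ) (hq : 0 < q) (hp : 0 < p) :
    ∃ C₁ : ℝ≥0∞, C₁ < ∞ ∧ ∀ n k : ℕ,
        ∫⁻ x in triadic n k,
          (∑' mj : ℕ × ℕ, if triadic mj.1 mj.2 ⊆ triadic n k then
              cexAlpha p mj.1 mj.2 ^ q * (triadic mj.1 mj.2).indicator 1 x
            else 0) ^ (p / q) ∂cxNu
          ≤ C₁ ^ p * cexMu (triadic n k) := by
  set β := ENNReal.ofReal ((2 / 3 : ℝ) ^ (q / p)) with hβ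
  have hβ1 : β < 1 := by
    rw [hβ, ENNReal.ofReal_lt_one]
    exact Real.rpow_lt_one (by norm_num) (by norm_num) (by positivity)
  have hpq : 0 < p / q := by positivity
  have hfin : (1 - β)⁻¹ < ∞ := by
    rw [ENNReal.inv_lt_top]; exact tsub_pos_of_lt hβ1
  refine ⟨(1 - β)⁻¹ ^ (1 / q), ENNReal.rpow_lt_top_of_nonneg (by positivity) hfin.ne, ?_⟩
  intro n k
  by_cases h : triadic n k ⊆ cantorN n
  · obtain ⟨ε, hε⟩ := triadic_piece (triadic_left n k) (h (triadic_left n k))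
    calc _ ≤ ∫⁻ x in triadic n k, (β ^ n * (1 - β)⁻¹) ^ (p / q) ∂cxNu := by
            refine lintegral_mono fun x => ?_
            exact ENNReal.rpow_le_rpow (cx_sum_le p q hq n k x) hpq.le
      _ = (β ^ n * (1 - β)⁻¹) ^ (p / q) * (2 : ℝ≥0∞)⁻¹ ^ n := by
            rw [setLIntegral_const, ← hε, cxNu_piece]
      _ = _ := by
            rw [cexMu_of_sub (triadic_meas n k) (h.trans (cantorN_sub n)), triadic_vol,
              ENNReal.mul_rpow_of_nonneg _ _ hpq.le, ← ENNReal.rpow_mul]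
            have e1 : 1 / q * p = p / q := by ring
            have e2 : (β ^ n) ^ (p / q) = ENNReal.ofReal ((2 / 3 : ℝ) ^ n) := by
              rw [hβ, ← ENNReal.ofReal_pow (by positivity),
                ENNReal.ofReal_rpow_of_nonneg (by positivity) hpq.le,
                ← Real.rpow_mul_natCast (by norm_num), ← Real.rpow_mul (by norm_num),
                ← Real.rpow_natCast]
              congr 2; field_simp
            have e3 : (2 : ℝ≥0∞)⁻¹ ^ n = ENNReal.ofReal ((1 / 2 : ℝ) ^ n) := by
              rw [ENNReal.ofReal_pow (by norm_num), one_div,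
                ENNReal.ofReal_inv_of_pos (by norm_num)]
              simp
            rw [e1, e2, e3, mul_comm (ENNReal.ofReal _) (_ ^ (p / q)), mul_assoc,
              ← ENNReal.ofReal_mul (by positivity), ← mul_pow, zpow_neg, zpow_natCast, ← inv_pow]
            norm_num
  · simp only [cx_sum_zero p q hq n k h, ENNReal.zero_rpow_of_pos hpq, lintegral_zero]
    exact zero_le

/-! ### failure of the inequality -/

/-- test function -/
noncomputable def cxF (p : ℝ) (N : ℕ) : ℝ → ℝ≥0∞ := fun x =>
  ⨆ m : Fin N, (cantorN m).indicator (fun _ => ENNReal.ofReal ((3 / 2 : ℝ) ^ ((m : ℝ) / p))) x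

lemma cxF_meas (p : ℝ) (N : ℕ) : Measurable (cxF p N) :=
  Measurable.iSup fun m => measurable_const.indicator (cantorN_meas m)

lemma cantorN_vol (m : ℕ) : volume (cantorN m) ≤ ENNReal.ofReal ((2 / 3 : ℝ) ^ m) := by
  unfold cantorN
  refine (measure_iUnion_fintype_le _ _).trans ?_
  simp only [piece_vol]
  rw [Finset.sum_const, Finset.card_univ, Fintype.card_fun, Fintype.card_bool, Fintype.card_fin,
    nsmul_eq_mul]
  have : ((2 ^ m : ℕ) : ℝ≥0∞) = ENNReal.ofReal (2 ^ m : ℝ) := by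
    rw [ENNReal.ofReal_pow (by norm_num)]; simp
  rw [this, ← ENNReal.ofReal_mul (by positivity), zpow_neg, zpow_natCast, div_pow, div_eq_mul_inv]

lemma cxF_norm (p : ℝ) (hp : 0 < p) (N : ℕ) : ∫⁻ x, cxF p N x ^ p ∂cexMu ≤ N := by
  have h1 : ∀ x, cxF p N x ^ p ≤ ∑ m : Fin N,
      (cantorN m).indicator (fun _ => ENNReal.ofReal ((3 / 2 : ℝ) ^ (m : ℕ))) x := by
    intro x
    rw [← ENNReal.le_rpow_inv_iff hp]
    refine iSup_le fun m => ?_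
    rw [ENNReal.le_rpow_inv_iff hp]
    refine le_trans ?_ (Finset.single_le_sum (f := fun m : Fin N =>
      (cantorN m).indicator (fun _ => ENNReal.ofReal ((3 / 2 : ℝ) ^ (m : ℕ))) x)
      (fun _ _ => zero_le) (Finset.mem_univ m))
    by_cases hx : x ∈ cantorN m
    · simp only [indicator_of_mem hx]
      rw [ENNReal.ofReal_rpow_of_nonneg (by positivity) hp.le, ← Real.rpow_mul (by norm_num),
        div_mul_cancel₀ _ hp.ne', Real.rpow_natCast]
    · simp only [indicator_of_notMem hx]
      rw [ENNReal.zero_rpow_of_pos hp]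
  calc _ ≤ ∫⁻ x, ∑ m : Fin N,
      (cantorN m).indicator (fun _ => ENNReal.ofReal ((3 / 2 : ℝ) ^ (m : ℕ))) x ∂cexMu :=
        lintegral_mono h1
    _ = ∑ m : Fin N, ENNReal.ofReal ((3 / 2 : ℝ) ^ (m : ℕ)) * cexMu (cantorN m) := by
        rw [lintegral_finsetSum _ fun (m : Fin N) _ =>
          measurable_const.indicator (cantorN_meas (m : ℕ))]
        refine Finset.sum_congr rfl fun m _ => ?_
        rw [lintegral_indicator_const (cantorN_meas m)]
    _ ≤ ∑ m : Fin N, 1 := by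
        refine Finset.sum_le_sum fun m _ => ?_
        rw [cexMu_of_sub (cantorN_meas m) (cantorN_sub m)]
        refine (mul_le_mul_right (cantorN_vol m) _).trans ?_
        rw [← ENNReal.ofReal_mul (by positivity), ← mul_pow]
        norm_num
    _ = N := by simp

lemma cxF_lower (p q : ℝ) (hq : 0 < q) (N : ℕ) (x : ℝ) (hx : x ∈ cantorN N) :
    (N : ℝ≥0∞) ≤ ∑' mj : ℕ × ℕ,
      (cexAlpha p mj.1 mj.2 * avgOp cexMu (triadic mj.1 mj.2) (cxF p N) x) ^ q := by
  rw [ENNReal.tsum_prod']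
  have key : ∀ m ∈ Finset.range N, (1 : ℝ≥0∞) ≤ ∑' j : ℕ,
      (cexAlpha p m j * avgOp cexMu (triadic m j) (cxF p N) x) ^ q := by
    intro m hm
    have hm' := Finset.mem_range.1 hm
    obtain ⟨ε, hε⟩ := mem_iUnion.1 (cantorN_anti hm'.le hx)
    obtain ⟨K, hK⟩ := piece_triadic ε
    refine le_trans ?_ (ENNReal.le_tsum K)
    have hsub : triadic m K ⊆ cantorN m := by rw [← hK]; exact subset_iUnion _ ε
    rw [hK] at hε
    refine ENNReal.one_le_rpow ?_ hq
    unfold cexAlpha avgOp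
    rw [if_pos hsub, indicator_of_mem hε]
    have hvol : cexMu (triadic m K) = ENNReal.ofReal ((3 : ℝ) ^ (-(m : ℤ))) := by
      rw [cexMu_of_sub (triadic_meas m K) (hsub.trans (cantorN_sub m)), triadic_vol]
    have havg : ENNReal.ofReal ((3 / 2 : ℝ) ^ ((m : ℝ) / p)) ≤
        (∫⁻ y in triadic m K, cxF p N y ∂cexMu) / cexMu (triadic m K) := by
      rw [ENNReal.le_div_iff_mul_le, ← setLIntegral_const]
      · refine setLIntegral_mono' (triadic_meas m K) fun y hy => ?_
        refine le_trans ?_ (le_iSup _ (⟨m, hm'⟩ : Fin N))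
        simp only [indicator_of_mem (hsub hy)]
        exact le_rfl
      · left; rw [hvol]; simp
      · left; rw [hvol]; exact ENNReal.ofReal_ne_top
    refine le_trans ?_ (mul_le_mul_right havg _)
    rw [← ENNReal.ofReal_mul (by positivity), ← Real.mul_rpow (by norm_num) (by norm_num)]
    norm_num
  calc (N : ℝ≥0∞) = ∑ m ∈ Finset.range N, 1 := by simp
    _ ≤ _ := Finset.sum_le_sum key
    _ ≤ _ := ENNReal.sum_le_tsum _

lemma cx_fail (p q : ℝ) (hq : 0 < q) (hqp : q < p) :
    ¬ ∃ C : ℝ≥0∞, C < ∞ ∧ ∀ f : ℝ → ℝ≥0∞, Measurable f →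
          ∫⁻ x, (∑' mj : ℕ × ℕ,
              (cexAlpha p mj.1 mj.2 * avgOp cexMu (triadic mj.1 mj.2) f x) ^ q)
            ^ (p / q) ∂cxNu ≤ C ^ p * ∫⁻ x, f x ^ p ∂cexMu := by
  rintro ⟨C, hC, h⟩
  have hp : 0 < p := hq.trans hqp
  have hpq : 0 < p / q := by positivity
  have hCp : C ^ p ≠ ∞ := (ENNReal.rpow_lt_top_of_nonneg hp.le hC.ne).ne
  have bound : ∀ N : ℕ, (N : ℝ≥0∞) ^ (p / q) ≤ C ^ p * N := by
    intro N
    calc (N : ℝ≥0∞) ^ (p / q)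
        = ∫⁻ x, (cantorN N).indicator (fun _ => (N : ℝ≥0∞) ^ (p / q)) x ∂cxNu := by
          rw [lintegral_indicator_const (cantorN_meas N), cxNu_cantorN, mul_one]
      _ ≤ _ := by
          refine lintegral_mono fun x => ?_
          by_cases hx : x ∈ cantorN N
          · rw [indicator_of_mem hx]
            exact ENNReal.rpow_le_rpow (cxF_lower p q hq N x hx) hpq.le
          · rw [indicator_of_notMem hx]; exact zero_le
      _ ≤ _ := h (cxF p N) (cxF_meas p N)
      _ ≤ _ := mul_le_mul_right (cxF_norm p hp N) _
  have ht : Tendsto (fun N : ℕ => (N : ℝ) ^ (p / q - 1)) atTop atTop :=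
    (_root_.tendsto_rpow_atTop (by rw [sub_pos, one_lt_div hq]; exact hqp)).comp
      tendsto_natCast_atTop_atTop
  obtain ⟨N, hN1, hN2⟩ := ((ht.eventually_gt_atTop (C ^ p).toReal).and
    (eventually_gt_atTop 0)).exists
  have hN0 : (0 : ℝ) < N := by exact_mod_cast hN2
  have hb := ENNReal.toReal_mono (ENNReal.mul_ne_top hCp (ENNReal.natCast_ne_top N)) (bound N)
  rw [← ENNReal.toReal_rpow, ENNReal.toReal_mul, ENNReal.toReal_natCast] at hb
  rw [Real.rpow_sub_one hN0.ne', lt_div_iff₀ hN0] at hN1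
  linarith

/-- **the counterexample.** For every `1 ≤ q < p < ∞` there is a measure
`ν` (the 1/3-Cantor measure: `ν` gives each component of `C_n` mass `2⁻ⁿ` and vanishes
outside `[0,1)`) such that, with `μ` Lebesgue measure on `[0,1)` and the coefficients
`α_I = (2/3)^{n/p}` on components of `C_n`, the testing condition holds for all tri-adic
intervals with a finite constant `C₁`, yet no finite constant `C` satisfies the
vector-valued inequality. -/
theorem counterexample_q_lt_p (p q : ℝ) (hq : 1 ≤ q) (hqp : q < p) :
    ∃ ν : Measure ℝ,
      (∀ (n : ℕ) (ε : Fin n → Bool), ν (cantorPiece ε) = (2 : ℝ≥0∞)⁻¹ ^ n) ∧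
      ν (Ico (0 : ℝ) 1)ᶜ = 0 ∧
      (∃ C₁ : ℝ≥0∞, C₁ < ∞ ∧ ∀ n k : ℕ,
        ∫⁻ x in triadic n k,
          (∑' mj : ℕ × ℕ, if triadic mj.1 mj.2 ⊆ triadic n k then
              cexAlpha p mj.1 mj.2 ^ q * (triadic mj.1 mj.2).indicator 1 x
            else 0) ^ (p / q) ∂ν
          ≤ C₁ ^ p * cexMu (triadic n k)) ∧
      ¬ ∃ C : ℝ≥0∞, C < ∞ ∧ ∀ f : ℝ → ℝ≥0∞, Measurable f →
          ∫⁻ x, (∑' mj : ℕ × ℕ,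
              (cexAlpha p mj.1 mj.2 * avgOp cexMu (triadic mj.1 mj.2) f x) ^ q)
            ^ (p / q) ∂ν ≤ C ^ p * ∫⁻ x, f x ^ p ∂cexMu := by
  have hq0 : 0 < q := by linarith
  exact ⟨cxNu, fun n ε => cxNu_piece ε, cxNu_compl,
    cx_testing p q hq0 (hq0.trans hqp), cx_fail p q hq0 hqp⟩
end

section
/- Counterexample, testing condition: let 1 ≤ q < p < ∞, μ = Lebesgue measure on [0,1), ν = the Cantor measure, and α_I = (2/3)^{n/p} if I is a tri-adic interval of length 3^{-n} contained in C_n, α_I = 0 otherwise. Then there is a constant K depending only on p, q such that for every tri-adic interval J that is a connected component of C_n, ∫_J (Σ_{tri-adic I ⊆ J} α_I^q · 1_I)^{p/q} dν ≤ K · (2/3)^n · ν(J) = K · μ(J). -/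
open MeasureTheory ENNReal NNReal Set Filter
open scoped Classical

theorem aux_base_nonneg {n : ℕ} (ε : Fin n → Bool) : 0 ≤ cantorBase ε := by
  unfold cantorBase
  apply Finset.sum_nonneg
  intro j _
  split_ifs <;> positivity

theorem aux_base_le {n : ℕ} (ε : Fin n → Bool) : cantorBase ε + 3 ^ (-(n : ℤ)) ≤ 1 := by
  induction n with
  | zero => simp [cantorBase]
  | succ n ih =>
    have h := ih (fun j => ε j.castSucc)
    unfold cantorBase at h ⊢
    rw [Fin.sum_univ_castSucc]
    simp only [Fin.val_castSucc, Fin.val_last]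
    have e : (3 : ℝ) ^ (-((n + 1 : ℕ) : ℤ)) = 3 ^ (-(n : ℤ)) / 3 := by
      rw [Nat.cast_succ, neg_add, zpow_add₀ (by norm_num)]; norm_num; ring
    have e' : (3 : ℝ) ^ (-(n : ℤ) - 1) = 3 ^ (-(n : ℤ)) / 3 := by
      rw [zpow_sub₀ (by norm_num)]; norm_num
    rw [e, e']
    have : (0 : ℝ) < 3 ^ (-(n : ℤ)) := by positivity
    split_ifs <;> linarith

theorem aux_triadic_sub {n m k : ℕ} (ε : Fin n → Bool) (h : triadic m k ⊆ cantorPiece ε) :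
    n ≤ m := by
  have h1 := measure_mono (μ := volume) h
  unfold triadic cantorPiece at h1
  rw [Real.volume_Ico, Real.volume_Ico, ENNReal.ofReal_le_ofReal_iff (by ring_nf; positivity)] at h1
  have h2 : (3 : ℝ) ^ (-(m : ℤ)) ≤ 3 ^ (-(n : ℤ)) := by linarith
  have := (zpow_le_zpow_iff_right₀ (by norm_num : (1 : ℝ) < 3)).1 h2
  omega

theorem aux_triadic_unique {m k : ℕ} {x : ℝ} (h : x ∈ triadic m k) : k = ⌊x * 3 ^ m⌋₊ := by
  obtain ⟨h1, h2⟩ := h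
  rw [zpow_neg, zpow_natCast, ← div_eq_mul_inv] at h1 h2
  rw [div_le_iff₀ (by positivity)] at h1
  rw [lt_div_iff₀ (by positivity)] at h2
  exact ((Nat.floor_eq_iff (le_trans (by positivity) h1)).2 ⟨h1, h2⟩).symm

theorem aux_pointwise (p q : ℝ) (hq : 1 ≤ q) (hqp : q < p) (n : ℕ) (ε : Fin n → Bool) (x : ℝ) :
    (∑' mj : ℕ × ℕ, if triadic mj.1 mj.2 ⊆ cantorPiece ε then
                cexAlpha p mj.1 mj.2 ^ q * (triadic mj.1 mj.2).indicator 1 x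
              else 0) ≤ ENNReal.ofReal ((2 / 3 : ℝ) ^ (q / p)) ^ n *
                (1 - ENNReal.ofReal ((2 / 3 : ℝ) ^ (q / p)))⁻¹ := by
  set c := ENNReal.ofReal ((2 / 3 : ℝ) ^ (q / p)) with hc
  have hα : ∀ m k, cexAlpha p m k ^ q ≤ c ^ m := by
    intro m k
    unfold cexAlpha
    split_ifs
    · rw [ENNReal.ofReal_rpow_of_pos (by positivity), hc, ← ENNReal.ofReal_pow (by positivity),
        ← Real.rpow_mul (by norm_num), ← Real.rpow_natCast, ← Real.rpow_mul (by norm_num)]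
      apply le_of_eq
      congr 2
      ring
    · rw [ENNReal.zero_rpow_of_pos (by linarith)]
      exact zero_le
  rw [ENNReal.tsum_prod (f := fun m k => if triadic m k ⊆ cantorPiece ε then
                cexAlpha p m k ^ q * (triadic m k).indicator 1 x else 0)]
  calc _ ≤ ∑' m : ℕ, (if n ≤ m then c ^ m else 0) := by
        apply ENNReal.tsum_le_tsum
        intro m
        rw [tsum_eq_single ⌊x * 3 ^ m⌋₊]
        · split_ifs with h1 h2 h2
          · refine (mul_le_mul' (hα _ _) (Set.indicator_le_self' (by simp) x)).trans ?_
            simp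
          · exact absurd (aux_triadic_sub ε h1) h2
          · exact zero_le
          · exact le_rfl
        · intro k hk
          have : x ∉ triadic m k := fun h => hk (aux_triadic_unique h)
          simp [this]
    _ = c ^ n * (1 - c)⁻¹ := by
        rw [← Summable.sum_add_tsum_nat_add' (k := n) ENNReal.summable]
        rw [Finset.sum_eq_zero]
        · simp only [Nat.le_add_left, if_true, zero_add, pow_add]
          rw [ENNReal.tsum_mul_right, ENNReal.tsum_geometric, mul_comm]
        · intro i hi
          rw [if_neg (by simpa using hi)]

/-- **counterexample: the testing condition holds.** With `μ` Lebesgue on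
`[0,1)`, `ν` the Cantor measure and `α_I = (2/3)^{n/p}` on components of `C_n`, there is
`K = K(p,q)` such that for every component `J` of `C_n`,
`∫_J (∑_{I ⊆ J} α_I^q 1_I)^{p/q} dν ≤ K (2/3)ⁿ ν(J) = K μ(J)`. -/
theorem counterexample_testing_condition (p q : ℝ) (hq : 1 ≤ q) (hqp : q < p) :
    ∃ K : ℝ≥0∞, 0 < K ∧ K < ∞ ∧
      ∀ ν : Measure ℝ,
        (∀ (n : ℕ) (ε : Fin n → Bool), ν (cantorPiece ε) = (2 : ℝ≥0∞)⁻¹ ^ n) →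
        ν (Ico (0 : ℝ) 1)ᶜ = 0 →
        ∀ (n : ℕ) (ε : Fin n → Bool),
          (∫⁻ x in cantorPiece ε,
            (∑' mj : ℕ × ℕ, if triadic mj.1 mj.2 ⊆ cantorPiece ε then
                cexAlpha p mj.1 mj.2 ^ q * (triadic mj.1 mj.2).indicator 1 x
              else 0) ^ (p / q) ∂ν
            ≤ K * ((2 / 3 : ℝ≥0∞) ^ n * ν (cantorPiece ε))) ∧
          (2 / 3 : ℝ≥0∞) ^ n * ν (cantorPiece ε) = cexMu (cantorPiece ε) := by
  have hp : 0 < p := by linarith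
  have hq0 : 0 < q := by linarith
  set c := ENNReal.ofReal ((2 / 3 : ℝ) ^ (q / p)) with hc
  have hc1 : c < 1 := by
    rw [hc, ENNReal.ofReal_lt_one]
    exact Real.rpow_lt_one (by norm_num) (by norm_num) (by positivity)
  have hcp : c ^ (p / q) = 2 / 3 := by
    rw [hc, ENNReal.ofReal_rpow_of_pos (by positivity), ← Real.rpow_mul (by norm_num)]
    have : q / p * (p / q) = 1 := by field_simp
    rw [this, Real.rpow_one, ENNReal.ofReal_div_of_pos (by norm_num)]
    norm_num
  have hfin : (1 - c)⁻¹ ≠ ∞ := by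
    rw [ENNReal.inv_ne_top]
    exact (tsub_pos_of_lt hc1).ne'
  have hpos : (1 - c)⁻¹ ≠ 0 := by
    rw [ENNReal.inv_ne_zero]
    exact ENNReal.sub_ne_top (by simp)
  refine ⟨((1 - c)⁻¹) ^ (p / q), ENNReal.rpow_pos (pos_iff_ne_zero.2 hpos) hfin,
    ENNReal.rpow_lt_top_of_nonneg (by positivity) hfin, ?_⟩
  intro ν hν _ n ε
  constructor
  · calc _ ≤ ∫⁻ x in cantorPiece ε, (c ^ n * (1 - c)⁻¹) ^ (p / q) ∂ν := by
          apply lintegral_mono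
          intro x
          exact ENNReal.rpow_le_rpow (aux_pointwise p q hq hqp n ε x) (by positivity)
      _ = (c ^ n * (1 - c)⁻¹) ^ (p / q) * ν (cantorPiece ε) := by rw [setLIntegral_const]
      _ = _ := by
          rw [ENNReal.mul_rpow_of_nonneg _ _ (by positivity), ← ENNReal.rpow_natCast,
            ← ENNReal.rpow_mul, mul_comm (n : ℝ), ENNReal.rpow_mul, hcp, ENNReal.rpow_natCast]
          ring
      _ ≤ _ := le_rfl
  · have hsub : cantorPiece ε ⊆ Ico (0 : ℝ) 1 :=
      Ico_subset_Ico (aux_base_nonneg ε) (aux_base_le ε)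
    rw [hν, cexMu, Measure.restrict_apply (by unfold cantorPiece; exact measurableSet_Ico),
      inter_eq_left.2 hsub, cantorPiece, Real.volume_Ico, add_sub_cancel_left, ← mul_pow,
      zpow_neg, zpow_natCast, ← inv_pow, ENNReal.ofReal_pow (by positivity),
      ENNReal.ofReal_inv_of_pos (by norm_num)]
    congr 1
    rw [div_eq_mul_inv, mul_right_comm, ENNReal.mul_inv_cancel (by simp) (by simp)]
    norm_num
end

section
/- Counterexample, lower bound on averages: let p > 0, r > 0, and define f on [0,1) by f = (3/2)^{m/p} · m^{-r} on each maximal tri-adic interval of length 3^{-m} contained in [0,1) \ C, f = 0 on C. Then for every tri-adic interval I of length 3^{-n} that is a connected component of C_n, the Lebesgue average satisfies 3^n ∫_I f dx ≥ (1/3) · (3/2)^{(n+1)/p} · (n+1)^{-r}. -/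
open MeasureTheory ENNReal NNReal Set Filter
open scoped Classical

/-- **counterexample: lower bound on averages.** For `p, r > 0` and every
tri-adic interval `I` that is a connected component of `C_n`, the Lebesgue average of the
gap function `f` satisfies `3ⁿ ∫_I f dx ≥ (1/3) (3/2)^{(n+1)/p} (n+1)^{-r}`. -/
theorem counterexample_average_lower_bound (p r : ℝ) (hp : 0 < p) (hr : 0 < r)
    (n : ℕ) (ε : Fin n → Bool) :
    ENNReal.ofReal ((1 / 3 : ℝ) * (3 / 2 : ℝ) ^ (((n : ℝ) + 1) / p) *
        ((n : ℝ) + 1) ^ (-r))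
      ≤ ENNReal.ofReal ((3 : ℝ) ^ (n : ℕ)) * ∫⁻ x in cantorPiece ε, cexF p r x ∂volume := by
  set c : ℝ := (3 / 2 : ℝ) ^ (((n : ℝ) + 1) / p) * ((n : ℝ) + 1) ^ (-r) with hc
  have hc0 : 0 ≤ c := by positivity
  have h3 : (3 : ℝ) ^ (-(n : ℤ)) = 3 * 3 ^ (-(n + 1 : ℤ)) := by
    rw [show (-(n : ℤ)) = 1 + (-(n + 1 : ℤ)) by ring, zpow_add₀ (by norm_num), zpow_one]
  have hpos : (0 : ℝ) < 3 ^ (-(n + 1 : ℤ)) := by positivity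
  have hsub : gapPiece ε ⊆ cantorPiece ε := by
    unfold gapPiece cantorPiece
    rw [h3]
    apply Ico_subset_Ico <;> linarith
  have hle : ENNReal.ofReal c * ENNReal.ofReal (3 ^ (-(n + 1 : ℤ)))
      ≤ ∫⁻ x in cantorPiece ε, cexF p r x ∂volume := by
    calc ENNReal.ofReal c * ENNReal.ofReal (3 ^ (-(n + 1 : ℤ)))
        = ∫⁻ x in gapPiece ε, ENNReal.ofReal c ∂volume := by
          rw [setLIntegral_const]
          congr 1
          unfold gapPiece
          rw [Real.volume_Ico]
          congr 1
          ring
      _ ≤ ∫⁻ x in gapPiece ε, cexF p r x ∂volume := by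
          apply setLIntegral_mono' (by unfold gapPiece; exact measurableSet_Ico)
          intro x hx
          unfold cexF
          refine le_trans ?_ (ENNReal.le_tsum (⟨n, ε⟩ : Σ m : ℕ, Fin m → Bool))
          simp only [indicator_of_mem hx]
          exact le_rfl
      _ ≤ _ := lintegral_mono_set hsub
  refine le_trans (le_of_eq ?_) (mul_le_mul_right hle _)
  rw [← ENNReal.ofReal_mul hc0, ← ENNReal.ofReal_mul (by positivity)]
  congr 1
  have h4 : (3 : ℝ) ^ n * 3 ^ (-(n + 1 : ℤ)) = 1 / 3 := by
    rw [← zpow_natCast, ← zpow_add₀ (by norm_num)]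
    norm_num
  rw [mul_assoc, ← hc]
  linear_combination (-c) * h4
end
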